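/- arXiv:1203.1955 — 2 statements merged into one kernel-verified Lean document; each statement's English description precedes it below -/
import Mathlib

section
/- Let R be a commutative noetherian local ring, M a finitely generated R-module, a an element of R, n an integer and t a nonnegative integer. Suppose that a·Ext_R^n(M,X) = 0 and a·Ext_R^{n+1}(M,X) = 0 for every finitely generated R-module X whose dimension is at most t. Then a²·Ext_R^n(M,X) = 0 for every finitely generated R-module X whose dimension is at most t+1. -/
open CategoryTheory IsLocalRing

noncomputable section

/-- The `i`-th Tor module of two `R`-modules, as an object of `ModuleCat R`. -/
def TorMod (R : Type) [CommRing R] (i : ℕ) (M N : ModuleCat.{0} R) : ModuleCat.{0} R :=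
  ((Tor (ModuleCat.{0} R) i).obj M).obj N

/-- The `i`-th Ext module of two `R`-modules, as an object of `ModuleCat R`. -/
def ExtMod (R : Type) [CommRing R] (i : ℕ) (M N : ModuleCat.{0} R) : ModuleCat.{0} R :=
  ((Ext R (ModuleCat.{0} R) i).obj (Opposite.op M)).obj N

/-- Integer-indexed Tor: `Tor_n = 0` for `n < 0`. -/
def TorZ (R : Type) [CommRing R] (n : ℤ) (M N : ModuleCat.{0} R) : ModuleCat.{0} R :=
  if 0 ≤ n then TorMod R n.toNat M N else ModuleCat.of R PUnit

/-- Integer-indexed Ext: `Ext^n = 0` for `n < 0`. -/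
def ExtZ (R : Type) [CommRing R] (n : ℤ) (M N : ModuleCat.{0} R) : ModuleCat.{0} R :=
  if 0 ≤ n then ExtMod R n.toNat M N else ModuleCat.of R PUnit

/-- The depth of a module `N` over a local ring `S`, defined as the infimum of the set of
integers `i` such that `Ext^i(k, N) ≠ 0`, where `k` is the residue field of `S`
(`⊤` if no such `i` exists). -/
def moduleDepth (S : Type) [CommRing S] [IsLocalRing S] (N : Type) [AddCommGroup N]
    [Module S N] : ℕ∞ :=
  sInf {i : ℕ∞ | ∃ j : ℕ, i = (j : ℕ∞) ∧
    Nontrivial (ExtMod S j (ModuleCat.of S (ResidueField S)) (ModuleCat.of S N))}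

/-- A local ring is regular if it is noetherian and its maximal ideal can be generated by
(Krull dimension of `S`)-many elements. -/
def IsRegularLocal (S : Type) [CommRing S] [IsLocalRing S] : Prop :=
  IsNoetherianRing S ∧ ∃ s : Finset S, Ideal.span (s : Set S) = maximalIdeal S ∧
    (s.card : WithBot ℕ∞) = ringKrullDim S

/-- A local ring is Cohen-Macaulay if its depth (as a module over itself) equals its
Krull dimension. -/
def IsCMLocalRing (R : Type) [CommRing R] [IsLocalRing R] : Prop :=
  (moduleDepth R R : WithBot ℕ∞) = ringKrullDim R

/-- A module `M` over a local ring `R` is maximal Cohen-Macaulay if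
`depth M_p ≥ dim R_p` for every prime ideal `p` of `R`. -/
def IsMCMModule (R : Type) [CommRing R] [IsLocalRing R] (M : Type) [AddCommGroup M]
    [Module R M] : Prop :=
  ∀ (p : Ideal R) [p.IsPrime],
    ringKrullDim (Localization.AtPrime p) ≤
      (moduleDepth (Localization.AtPrime p) (LocalizedModule p.primeCompl M) : WithBot ℕ∞)

/-- Membership in `CM(R)`: finitely generated maximal Cohen-Macaulay modules. -/
def MemCM (R : Type) [CommRing R] [IsLocalRing R] (M : ModuleCat.{0} R) : Prop :=
  Module.Finite R M ∧ IsMCMModule R M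

/-- Membership in `CM₀(R)`: finitely generated maximal Cohen-Macaulay modules that are
locally free on the punctured spectrum. -/
def MemCM0 (R : Type) [CommRing R] [IsLocalRing R] (M : ModuleCat.{0} R) : Prop :=
  Module.Finite R M ∧ IsMCMModule R M ∧
    ∀ (p : Ideal R) [p.IsPrime], p ≠ maximalIdeal R →
      Module.Free (Localization.AtPrime p) (LocalizedModule p.primeCompl M)

/-- The singular locus of `R`: primes `p` such that `R_p` is not regular. -/
def singularLocus (R : Type) [CommRing R] : Set (PrimeSpectrum R) :=
  {p | ¬ IsRegularLocal (Localization.AtPrime p.asIdeal)}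

/-- The nonfree locus of a module `M`: primes `p` such that `M_p` is not a free
`R_p`-module. -/
def nonfreeLocus (R : Type) [CommRing R] (M : Type) [AddCommGroup M] [Module R M] :
    Set (PrimeSpectrum R) :=
  {p | ¬ Module.Free (Localization.AtPrime p.asIdeal)
        (LocalizedModule p.asIdeal.primeCompl M)}

/-- `K` is a first syzygy of `N` in a minimal free resolution: there is a surjection
`f : R^n → N` with `ker f ⊆ m·R^n` and `K ≅ ker f`. -/
def IsMinimalSyzygy1 (R : Type) [CommRing R] [IsLocalRing R] (N K : ModuleCat.{0} R) : Prop :=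
  ∃ (n : ℕ) (f : (Fin n → R) →ₗ[R] N), Function.Surjective f ∧
    LinearMap.ker f ≤ (maximalIdeal R) • (⊤ : Submodule R (Fin n → R)) ∧
    Nonempty (K ≃ₗ[R] LinearMap.ker f)

/-- `K` is a `d`-th syzygy of `N` in a minimal free resolution. -/
def IsMinimalSyzygy (R : Type) [CommRing R] [IsLocalRing R] :
    ℕ → ModuleCat.{0} R → ModuleCat.{0} R → Prop
  | 0, N, K => Nonempty ((K : Type) ≃ₗ[R] N)
  | d + 1, N, K => ∃ L : ModuleCat.{0} R, IsMinimalSyzygy1 R N L ∧ IsMinimalSyzygy R d L K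

/-- A module is indecomposable if it is nonzero and is not isomorphic to the direct sum of
two nonzero modules. -/
def IndecomposableModule (R : Type) [CommRing R] (M : Type) [AddCommGroup M] [Module R M] :
    Prop :=
  Nontrivial M ∧ ∀ (A B : Type) [AddCommGroup A] [Module R A] [AddCommGroup B] [Module R B],
    Nonempty (M ≃ₗ[R] A × B) → (Subsingleton A ∨ Subsingleton B)

lemma smul_zero_iff_aux {R : Type} [CommRing R] (S : ShortComplex (ModuleCat.{0} R)) (a : R) :
    (∀ x : S.homology, a • x = 0) ↔ ∀ f : S.X₂, S.g f = 0 → ∃ g : S.X₁, S.f g = a • f := by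
  let e : S.homology ≃ₗ[R] (LinearMap.ker S.g.hom ⧸ LinearMap.range S.moduleCatToCycles) :=
    S.moduleCatHomologyIso.toLinearEquiv
  have h1 : (∀ x : S.homology, a • x = 0) ↔
      ∀ x : (LinearMap.ker S.g.hom ⧸ LinearMap.range S.moduleCatToCycles), a • x = 0 := by
    constructor
    · intro h x
      have := h (e.symm x)
      rw [← map_smul] at this
      exact (LinearEquiv.map_eq_zero_iff _).1 this
    · intro h x
      have := h (e x)
      have h2 : e (a • x) = 0 := by rw [map_smul]; exact this
      exact (LinearEquiv.map_eq_zero_iff _).1 h2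
  rw [h1]
  constructor
  · intro h f hf
    have := h (Submodule.Quotient.mk ⟨f, hf⟩)
    rw [← Submodule.Quotient.mk_smul, Submodule.Quotient.mk_eq_zero] at this
    obtain ⟨g, hg⟩ := this
    exact ⟨g, congrArg Subtype.val hg⟩
  · intro h x
    obtain ⟨⟨f, hf⟩, rfl⟩ := Submodule.Quotient.mk_surjective _ x
    obtain ⟨g, hg⟩ := h f hf
    rw [← Submodule.Quotient.mk_smul, Submodule.Quotient.mk_eq_zero]
    exact ⟨g, Subtype.ext hg⟩

lemma extMod_smul_zero_iff {R : Type} [CommRing R] {M : ModuleCat.{0} R}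
    (P : ProjectiveResolution M) (Y : ModuleCat.{0} R) (n : ℕ) (a : R) :
    (∀ x : ExtMod R n M Y, a • x = 0) ↔
      ∀ f : P.complex.X n ⟶ Y, P.complex.d (n + 1) n ≫ f = 0 →
        ∃ g : P.complex.X (n - 1) ⟶ Y, P.complex.d n (n - 1) ≫ g = a • f := by
  let K := P.complex.linearYonedaObj R Y
  have hp : (ComplexShape.up ℕ).prev n = n - 1 := by cases n <;> simp
  let e : ExtMod R n M Y ≅ (K.sc' (n - 1) n (n + 1)).homology :=
    P.isoExt n Y ≪≫ ShortComplex.homologyMapIso (K.isoSc' (n - 1) n (n + 1) hp (by simp))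
  have h1 : (∀ x : ExtMod R n M Y, a • x = 0) ↔
      ∀ x : (K.sc' (n - 1) n (n + 1)).homology, a • x = 0 := by
    let e' := e.toLinearEquiv
    constructor
    · intro h x
      have := h (e'.symm x)
      rw [← map_smul] at this
      exact (LinearEquiv.map_eq_zero_iff _).1 this
    · intro h x
      have := h (e' x)
      rw [← map_smul] at this
      exact (LinearEquiv.map_eq_zero_iff _).1 this
  rw [h1, smul_zero_iff_aux]
  exact Iff.rfl

lemma extMk_smul_aux {R : Type} [CommRing R] {M : ModuleCat.{0} R}
    (P : ProjectiveResolution M) (Y : ModuleCat.{0} R) (n : ℕ) (a : R)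
    (f : P.complex.X n ⟶ Y) (hf : P.complex.d (n + 1) n ≫ f = 0) :
    P.extMk (a • f) (n + 1) rfl (by simp [hf]) = a • P.extMk f (n + 1) rfl hf := by
  rw [Abelian.Ext.smul_eq_comp_mk₀, P.extMk_comp_mk₀]
  simp

lemma extMk_zero_iff_aux {R : Type} [CommRing R] {M : ModuleCat.{0} R}
    (P : ProjectiveResolution M) (Y : ModuleCat.{0} R) (n : ℕ)
    (f : P.complex.X n ⟶ Y) (hf : P.complex.d (n + 1) n ≫ f = 0) :
    P.extMk f (n + 1) rfl hf = 0 ↔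
      ∃ g : P.complex.X (n - 1) ⟶ Y, P.complex.d n (n - 1) ≫ g = f := by
  cases n with
  | succ p => exact P.extMk_eq_zero_iff f _ rfl hf p rfl
  | zero =>
    constructor
    · intro h
      refine ⟨0, ?_⟩
      rw [← P.extEquivCohomologyClass.apply_eq_iff_eq, P.extEquivCohomologyClass_extMk,
        P.extEquivCohomologyClass_zero,
        CochainComplex.HomComplex.CohomologyClass.mk_eq_zero_iff,
        CochainComplex.HomComplex.Cocycle.toSingleMk_mem_coboundaries_iff _ _ _ _ _ 1 (by simp)] at h
      obtain ⟨g, hg⟩ := h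
      have hz : g = 0 := (P.cochainComplex.isZero_of_isStrictlyLE 0 1).eq_of_src _ _
      rw [hz, Limits.comp_zero] at hg
      rw [Limits.comp_zero, ← cancel_epi (P.cochainComplexXIso (-(0 : ℕ)) 0 rfl).hom, Limits.comp_zero]
      exact hg
    · rintro ⟨g, hg⟩
      have : f = 0 := by rw [← hg]; simp
      subst this
      simp

lemma exists_avoid {R : Type} [CommRing R] [IsNoetherianRing R] [IsLocalRing R]
    (X : Type) [AddCommGroup X] [Module R X] [Module.Finite R X] (t : ℕ)
    (hd : Module.supportDim R X ≤ ((t + 1 : ℕ) : WithBot ℕ∞))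
    (hd' : ¬ Module.supportDim R X ≤ (t : WithBot ℕ∞)) :
    ∃ x ∈ maximalIdeal R, ∀ p ∈ (Module.annihilator R X).minimalPrimes, x ∉ p := by
  by_contra! hcon
  obtain ⟨p, hp, hle⟩ := ((maximalIdeal R).subset_union_prime_finite
    ((Module.annihilator R X).finite_minimalPrimes_of_isNoetherianRing R) (f := id) 0 0
      fun _ h _ _ ↦ h.isPrime).1 (fun x hx => by
        obtain ⟨p, hp, hxp⟩ := hcon x hx
        exact Set.mem_iUnion₂.2 ⟨p, hp, hxp⟩)
  have hpp : p.IsPrime := hp.isPrime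
  have hpm : p = maximalIdeal R := ((IsLocalRing.maximalIdeal.isMaximal R).eq_of_le hpp.ne_top hle).symm
  apply hd'
  have : Subsingleton (Module.support R X) := by
    have key : ∀ q : Module.support R X, q.1.asIdeal = maximalIdeal R := by
      intro q
      have h1 := Module.mem_support_iff_of_finite.1 q.2
      have h2 := IsLocalRing.le_maximalIdeal q.1.2.ne_top
      exact le_antisymm h2 (hpm ▸ hp.2 ⟨q.1.2, h1⟩ (hpm ▸ h2))
    exact ⟨fun q r => Subtype.ext (PrimeSpectrum.ext ((key q).trans (key r).symm))⟩
  exact le_trans (Order.krullDim_nonpos_of_subsingleton) (by exact_mod_cast Nat.zero_le t)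

open scoped Pointwise in
lemma core {R : Type} [CommRing R] {M : ModuleCat.{0} R}
    (P : ProjectiveResolution M) (X : ModuleCat.{0} R) (n : ℕ) (a r : R)
    (h1 : ∀ f : P.complex.X n ⟶ ModuleCat.of R (QuotSMulTop r X), P.complex.d (n + 1) n ≫ f = 0 →
        ∃ g : P.complex.X (n - 1) ⟶ ModuleCat.of R (QuotSMulTop r X), P.complex.d n (n - 1) ≫ g = a • f)
    (h2 : ∀ f : P.complex.X (n + 1) ⟶ ModuleCat.of R (LinearMap.ker (LinearMap.lsmul R X r)),
        P.complex.d (n + 1 + 1) (n + 1) ≫ f = 0 →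
        ∃ g : P.complex.X n ⟶ ModuleCat.of R (LinearMap.ker (LinearMap.lsmul R X r)),
          P.complex.d (n + 1) n ≫ g = a • f)
    (f : P.complex.X n ⟶ X) (hf : P.complex.d (n + 1) n ≫ f = 0) :
    ∃ (g : P.complex.X n ⟶ X) (w : P.complex.X (n - 1) ⟶ X), P.complex.d (n + 1) n ≫ g = 0 ∧
      a ^ 2 • f = r • g + P.complex.d n (n - 1) ≫ w := by
  let π : X ⟶ ModuleCat.of R (QuotSMulTop r X) := ModuleCat.ofHom (Submodule.mkQ _)
  have : Epi π := (ModuleCat.epi_iff_surjective _).2 (Submodule.mkQ_surjective _)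
  obtain ⟨ψ, hψ⟩ := h1 (f ≫ π) (by rw [← Category.assoc, hf, Limits.zero_comp])
  let w := Projective.factorThru ψ π
  have hw : w ≫ π = ψ := Projective.factorThru_comp ψ π
  -- the submodule rX
  let I := LinearMap.range (LinearMap.lsmul R X r)
  let q : X ⟶ ModuleCat.of R I := ModuleCat.ofHom (LinearMap.rangeRestrict _)
  have : Epi q := (ModuleCat.epi_iff_surjective _).2 (LinearMap.surjective_rangeRestrict _)
  let u := a • f - P.complex.d n (n - 1) ≫ w
  have hu : u ≫ π = 0 := by
    simp only [u, Preadditive.sub_comp, Category.assoc, hw, hψ, Linear.smul_comp, sub_self]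
  have hu' : ∀ y, u.hom y ∈ I := by
    intro y
    have h3 : π.hom (u.hom y) = 0 := by
      have := congrArg (fun k => k.hom y) hu
      simpa using this
    have h4 : u.hom y ∈ r • (⊤ : Submodule R X) := (Submodule.Quotient.mk_eq_zero _).1 h3
    obtain ⟨z, -, hz⟩ := (Submodule.mem_smul_pointwise_iff_exists _ _ _).1 h4
    exact ⟨z, hz⟩
  let u' : P.complex.X n ⟶ ModuleCat.of R I := ModuleCat.ofHom (u.hom.codRestrict I hu')
  let v := Projective.factorThru u' q
  have hv : v ≫ q = u' := Projective.factorThru_comp u' q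
  have hrv : r • v = u := by
    ext y
    have := congrArg (fun k => ((k.hom y : I) : X)) hv
    exact this
  have hdd : P.complex.d (n + 1) n ≫ u = 0 := by
    simp [u, hf]
  let s := P.complex.d (n + 1) n ≫ v
  have hs : r • s = 0 := by
    simp only [s, ← Linear.comp_smul, hrv, hdd]
  have hs' : ∀ y, s.hom y ∈ LinearMap.ker (LinearMap.lsmul R X r) := by
    intro y
    have := congrArg (fun k => k.hom y) hs
    exact this
  let s' : P.complex.X (n + 1) ⟶ ModuleCat.of R (LinearMap.ker (LinearMap.lsmul R X r)) :=
    ModuleCat.ofHom (s.hom.codRestrict _ hs')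
  let ι : ModuleCat.of R (LinearMap.ker (LinearMap.lsmul R X r)) ⟶ X :=
    ModuleCat.ofHom (Submodule.subtype _)
  have : Mono ι := (ModuleCat.mono_iff_injective _).2 Subtype.val_injective
  have hs'ι : s' ≫ ι = s := rfl
  obtain ⟨χ, hχ⟩ := h2 s' (by
    rw [← cancel_mono ι, Category.assoc, hs'ι]
    simp [s])
  have hrι : r • ι = 0 := by
    ext y
    exact y.2
  refine ⟨a • v - χ ≫ ι, a • w, ?_, ?_⟩
  · rw [Preadditive.comp_sub, ← Category.assoc, hχ, Linear.smul_comp, hs'ι, Linear.comp_smul]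
    simp [s]
  · rw [smul_sub, ← Linear.comp_smul, hrι, smul_comm, hrv]
    simp only [u, Limits.comp_zero, sub_zero, smul_sub, Linear.comp_smul, pow_two, mul_smul]
    abel

theorem main_nat (R : Type) [CommRing R] [IsNoetherianRing R] [IsLocalRing R]
    (M : ModuleCat.{0} R) (hM : Module.Finite R M) (a : R) (n : ℕ) (t : ℕ)
    (h : ∀ X : ModuleCat.{0} R, Module.Finite R X →
        ringKrullDim (R ⧸ Module.annihilator R X) ≤ (t : WithBot ℕ∞) →
        (∀ x : ExtMod R n M X, a • x = 0) ∧ (∀ x : ExtMod R (n + 1) M X, a • x = 0))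
    (X : ModuleCat.{0} R) (hX : Module.Finite R X)
    (hd : ringKrullDim (R ⧸ Module.annihilator R X) ≤ ((t + 1 : ℕ) : WithBot ℕ∞)) :
      ∀ x : ExtMod R n M X, (a ^ 2) • x = 0 := by
  by_cases hd' : ringKrullDim (R ⧸ Module.annihilator R X) ≤ (t : WithBot ℕ∞)
  · intro x
    rw [pow_two, mul_smul, (h X hX hd').1 x, smul_zero]
  rw [← Module.supportDim_eq_ringKrullDim_quotient_annihilator] at hd hd'
  obtain ⟨x, hxm, hx⟩ := exists_avoid X t hd hd'
  obtain ⟨P⟩ := (inferInstance : HasProjectiveResolution M).out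
  rw [extMod_smul_zero_iff P]
  intro f hf
  rw [← extMk_zero_iff_aux P X n (a ^ 2 • f) (by simp [hf])]
  have hk : ∀ k : ℕ, ∃ e : Abelian.Ext M X n,
      P.extMk (a ^ 2 • f) (n + 1) rfl (by simp [hf]) = x ^ k • e := by
    intro k
    have hxk : ∀ p ∈ (Module.annihilator R X).minimalPrimes, x ^ k ∉ p := fun p hp hxp =>
      hx p hp (hp.isPrime.mem_of_pow_mem k hxp)
    have hq := Module.supportDim_quotSMulTop_succ_le_of_notMem_minimalPrimes hxk
    have hq' : Module.supportDim R (QuotSMulTop (x ^ k) X) ≤ (t : WithBot ℕ∞) := by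
      have := hq.trans hd
      push_cast at this
      exact (ENat.WithBot.add_le_add_one_right_iff).1 this
    have hker : Module.supportDim R (LinearMap.ker (LinearMap.lsmul R X (x ^ k))) ≤
        (t : WithBot ℕ∞) := by
      refine le_trans ?_ hq'
      apply Order.krullDim_le_of_strictMono
        (Set.inclusion (?_ : Module.support R (LinearMap.ker (LinearMap.lsmul R X (x ^ k))) ⊆
          Module.support R (QuotSMulTop (x ^ k) X))) (fun _ _ h => h)
      intro p hp
      rw [Module.support_quotSMulTop]
      refine ⟨Module.support_subset_of_injective (Submodule.subtype _) Subtype.val_injective hp, ?_⟩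
      have := Module.mem_support_iff_of_finite.1 hp
      rw [PrimeSpectrum.mem_zeroLocus, Set.singleton_subset_iff]
      apply this
      rw [Module.mem_annihilator]
      exact fun m => Subtype.ext m.2
    have e1 := (h (ModuleCat.of R (QuotSMulTop (x ^ k) X)) (by dsimp; infer_instance)
      (by rw [← Module.supportDim_eq_ringKrullDim_quotient_annihilator]; exact hq')).1
    have hfin : Module.Finite R (LinearMap.ker (LinearMap.lsmul R X (x ^ k))) := inferInstance
    have e2 := (h (ModuleCat.of R (LinearMap.ker (LinearMap.lsmul R X (x ^ k)))) hfin
      (by rw [← Module.supportDim_eq_ringKrullDim_quotient_annihilator]; exact hker)).2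
    rw [extMod_smul_zero_iff P] at e1 e2
    obtain ⟨g, w, hg, hgw⟩ := core P X n a (x ^ k) e1 e2 f hf
    refine ⟨P.extMk g (n + 1) rfl hg, ?_⟩
    rw [← extMk_smul_aux, ← sub_eq_zero, P.sub_extMk, extMk_zero_iff_aux]
    exact ⟨w, by rw [hgw]; abel⟩
  have hfin : Module.Finite R (Abelian.Ext M X n) := inferInstance
  have hI : Ideal.span {x} ≠ ⊤ := by
    intro htop
    have : Ideal.span {x} ≤ maximalIdeal R := by simpa [Ideal.span_le] using hxm
    exact (IsLocalRing.maximalIdeal.isMaximal R).ne_top (top_le_iff.1 (htop ▸ this))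
  have hbot := Ideal.iInf_pow_smul_eq_bot_of_isLocalRing (M := Abelian.Ext M X n) _ hI
  rw [← Submodule.mem_bot R, ← hbot, Submodule.mem_iInf]
  intro k
  obtain ⟨e, he⟩ := hk k
  rw [he]
  exact Submodule.smul_mem_smul (Ideal.pow_mem_pow (Ideal.mem_span_singleton_self x) k) trivial

/-- If `a · Ext^n(M,X) = 0` and `a · Ext^{n+1}(M,X) = 0` for every finitely
generated `R`-module `X` of dimension at most `t`, then `a² · Ext^n(M,X) = 0` for every
finitely generated `R`-module `X` of dimension at most `t + 1`. -/
theorem stmt1 (R : Type) [CommRing R] [IsNoetherianRing R] [IsLocalRing R]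
    (M : ModuleCat.{0} R) (hM : Module.Finite R M) (a : R) (n : ℤ) (t : ℕ)
    (h : ∀ X : ModuleCat.{0} R, Module.Finite R X →
        ringKrullDim (R ⧸ Module.annihilator R X) ≤ (t : WithBot ℕ∞) →
        (∀ x : ExtZ R n M X, a • x = 0) ∧ (∀ x : ExtZ R (n + 1) M X, a • x = 0)) :
    ∀ X : ModuleCat.{0} R, Module.Finite R X →
      ringKrullDim (R ⧸ Module.annihilator R X) ≤ ((t + 1 : ℕ) : WithBot ℕ∞) →
      ∀ x : ExtZ R n M X, (a ^ 2) • x = 0 := by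
  intro X hX hd
  by_cases hn : 0 ≤ n
  · obtain ⟨m, rfl⟩ := Int.eq_ofNat_of_zero_le hn
    have e1 : ∀ Y : ModuleCat.{0} R, ExtZ R (m : ℤ) M Y = ExtMod R m M Y := fun Y => by
      simp [ExtZ]
    have e2 : ∀ Y : ModuleCat.{0} R, ExtZ R ((m : ℤ) + 1) M Y = ExtMod R (m + 1) M Y := fun Y => by
      have : (0 : ℤ) ≤ (m : ℤ) + 1 := by lia
      have h' : ((m : ℤ) + 1).toNat = m + 1 := by lia
      rw [ExtZ, if_pos this, h']
    rw [e1]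
    refine main_nat R M hM a m t ?_ X hX hd
    intro Y hY hY'
    have := h Y hY hY'
    rwa [e1, e2] at this
  · rw [ExtZ, if_neg hn]
    intro x
    exact Subsingleton.elim (α := PUnit) _ _

end
end

section
/- Let R be a Cohen-Macaulay commutative noetherian local ring of Krull dimension d, and let a be an element of R such that a·Tor_i^R(K,L) = 0 for all integers i > 0 and all modules K, L in CM_0(R). Then a^{2^{2d}}·Tor_i^R(M,N) = 0 for all integers i > 4d and all finitely generated R-modules M and N. -/
open CategoryTheory IsLocalRing

noncomputable section

section partA

open Abelian

/-- Old Ext vanishing versus new Ext vanishing. -/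
lemma extMod_subsingleton_iff (S : Type) [CommRing S] (j : ℕ) (N M : ModuleCat.{0} S) :
    Subsingleton (ExtMod S j N M) ↔ Subsingleton (Abelian.Ext N M j) := by
  let P : ProjectiveResolution N := projectiveResolution N
  have e := P.isoExt (R := S) j M
  have h1 : Subsingleton (ExtMod S j N M) ↔ (P.complex.linearYonedaObj S M).ExactAt j := by
    rw [HomologicalComplex.exactAt_iff_isZero_homology, ← e.isZero_iff,
      ModuleCat.isZero_iff_subsingleton]
    rfl
  rw [h1]
  cases j with
  | zero =>
    rw [HomologicalComplex.exactAt_iff' _ 0 0 1 (by simp) (by simp),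
      ShortComplex.moduleCat_exact_iff, Ext.addEquiv₀.subsingleton_congr]
    have hepi : Epi (P.π.f 0) := inferInstance
    constructor
    · intro h
      refine ⟨fun x y => ?_⟩
      have key : ∀ x : N ⟶ M, x = 0 := by
        intro x
        obtain ⟨g, hg⟩ := h (P.π.f 0 ≫ x : P.complex.X 0 ⟶ M) (by
          have h2 : (P.complex.d 1 0 ≫ P.π.f 0) ≫ x = 0 := by
            rw [P.complex_d_comp_π_f_zero]; exact Limits.zero_comp
          exact (Category.assoc _ _ _).symm.trans h2)
        have hg' : P.complex.d 0 0 ≫ (g : P.complex.X 0 ⟶ M) = P.π.f 0 ≫ x := hg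
        have h3 : P.complex.d 0 0 ≫ (g : P.complex.X 0 ⟶ M) = 0 := by
          rw [P.complex.shape 0 0 (by simp)]; exact Limits.zero_comp
        have : P.π.f 0 ≫ x = P.π.f 0 ≫ 0 := (hg'.symm.trans h3).trans Limits.comp_zero.symm
        exact hepi.left_cancellation _ _ this
      rw [key x, key y]
    · intro h f hf
      have hf' : P.complex.d 1 0 ≫ (f : P.complex.X 0 ⟶ M) = 0 := hf
      let l := Limits.CokernelCofork.IsColimit.desc' P.isColimitCokernelCofork
        (f : P.complex.X 0 ⟶ M) hf'
      have h0 : l.1 = (0 : N ⟶ M) := Subsingleton.elim (α := N ⟶ M) _ _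
      have hl : P.cokernelCofork.π ≫ l.1 = f := l.2
      refine ⟨0, ?_⟩
      rw [map_zero, ← hl]
      have : P.cokernelCofork.π ≫ l.1 = (0 : P.complex.X 0 ⟶ M) := by
        rw [h0]; exact Limits.comp_zero
      exact this.symm
  | succ n =>
    rw [HomologicalComplex.exactAt_iff' _ n (n+1) (n+2) (by simp) (by simp),
      ShortComplex.moduleCat_exact_iff]
    constructor
    · intro h
      refine ⟨fun x y => ?_⟩
      have key : ∀ x : Abelian.Ext N M (n+1), x = 0 := by
        intro x
        obtain ⟨f, hf, rfl⟩ := P.extMk_surjective x (n+2) rfl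
        rw [P.extMk_eq_zero_iff f (n+2) rfl hf n rfl]
        obtain ⟨g, hg⟩ := h f hf
        exact ⟨g, hg⟩
      rw [key x, key y]
    · intro h f hf
      have hf' : P.complex.d (n+2) (n+1) ≫ (f : P.complex.X (n+1) ⟶ M) = 0 := hf
      obtain ⟨g, hg⟩ := (P.extMk_eq_zero_iff f (n+2) rfl hf' n rfl).1 (Subsingleton.elim _ _)
      exact ⟨g, hg⟩

lemma ext_subsingleton_X2 {R : Type} [CommRing R] {S : ShortComplex (ModuleCat.{0} R)}
    (hS : S.ShortExact) (K : ModuleCat.{0} R) (i : ℕ)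
    (h1 : Subsingleton (Abelian.Ext S.X₁ K i)) (h3 : Subsingleton (Abelian.Ext S.X₃ K i)) :
    Subsingleton (Abelian.Ext S.X₂ K i) := by
  have key : ∀ x : Abelian.Ext S.X₂ K i, x = 0 := by
    intro x
    obtain ⟨y, rfl⟩ := Ext.contravariant_sequence_exact₂ hS K x (Subsingleton.elim _ _)
    rw [Subsingleton.elim y 0, Ext.comp_zero]
  exact ⟨fun x y => by rw [key x, key y]⟩

lemma ext_iso_subsingleton {R : Type} [CommRing R] {X Y : ModuleCat.{0} R} (e : X ≅ Y)
    (K : ModuleCat.{0} R) (i : ℕ) (h : Subsingleton (Abelian.Ext X K i)) :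
    Subsingleton (Abelian.Ext Y K i) := by
  have key : ∀ y : Abelian.Ext Y K i, y = 0 := by
    intro y
    have : y = (Ext.mk₀ e.inv).comp ((Ext.mk₀ e.hom).comp y (zero_add i)) (zero_add i) := by
      simp [Ext.mk₀_comp_mk₀_assoc]
    rw [this, Subsingleton.elim ((Ext.mk₀ e.hom).comp y (zero_add i)) 0, Ext.comp_zero]
  exact ⟨fun x y => by rw [key x, key y]⟩

lemma ext_vanish_of_support {R : Type} [CommRing R] [IsNoetherianRing R] (K : ModuleCat.{0} R)
    (i : ℕ) (N : Type) [AddCommGroup N] [Module R N] [hN : Module.Finite R N]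
    (h : ∀ q : PrimeSpectrum R, q ∈ Module.support R N →
      Subsingleton (Abelian.Ext (ModuleCat.of R (R ⧸ q.asIdeal)) K i)) :
    Subsingleton (Abelian.Ext (ModuleCat.of R N) K i) := by
  revert h
  induction hN using IsNoetherianRing.induction_on_isQuotientEquivQuotientPrime R with
  | subsingleton N =>
    intro _
    have : Limits.IsZero (ModuleCat.of R N) := by
      rw [ModuleCat.isZero_iff_subsingleton]; assumption
    have key : ∀ y : Abelian.Ext (ModuleCat.of R N) K i, y = 0 := by
      intro y
      rw [← Ext.mk₀_id_comp y, this.eq_zero_of_src (𝟙 _), Ext.mk₀_zero, Ext.zero_comp]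
    exact ⟨fun x y => by rw [key x, key y]⟩
  | quotient N p f =>
    intro h
    refine ext_iso_subsingleton f.symm.toModuleIso K i (h p ?_)
    rw [f.support_eq, Module.support_eq_zeroLocus, Ideal.annihilator_quotient]
    exact fun x hx => hx
  | exact N₁ N₂ N₃ f g hf hg hfg h₁ h₃ =>
    intro h
    have hs := Module.support_of_exact hfg hf hg
    let S : ShortComplex (ModuleCat.{0} R) := ShortComplex.mk (ModuleCat.ofHom f) (ModuleCat.ofHom g)
      (by ext x; simpa using hfg.apply_apply_eq_zero x)
    have hS : S.ShortExact := 
      { exact := (ShortComplex.ShortExact.moduleCat_exact_iff_function_exact S).2 hfg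
        mono_f := (ModuleCat.mono_iff_injective _).2 hf
        epi_g := (ModuleCat.epi_iff_surjective _).2 hg }
    exact ext_subsingleton_X2 hS K i (h₁ fun q hq => h q (by rw [hs]; exact Or.inl hq))
      (h₃ fun q hq => h q (by rw [hs]; exact Or.inr hq))


lemma isch {R : Type} [CommRing R] [IsNoetherianRing R] [IsLocalRing R] (K : ModuleCat.{0} R)
    [Module.Finite R K] (d : ℕ)
    (h : ∀ i < d, Subsingleton (Abelian.Ext (ModuleCat.of R (R ⧸ maximalIdeal R)) K i))
    (q : PrimeSpectrum R) : ∀ i : ℕ, (i : ℕ∞) + Order.coheight q < d →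
      Subsingleton (Abelian.Ext (ModuleCat.of R (R ⧸ q.asIdeal)) K i) := by
  obtain ⟨I, hI⟩ := q
  induction I using IsNoetherian.induction with
  | hgt I ih =>
  intro i hi
  by_cases hm : I = maximalIdeal R
  · subst hm
    exact h i (by exact_mod_cast lt_of_le_of_lt le_self_add hi)
  obtain ⟨x, hxm, hxI⟩ := SetLike.exists_of_lt (lt_of_le_of_ne (IsLocalRing.le_maximalIdeal hI.ne_top) hm)
  have hreg : IsSMulRegular (R ⧸ I) x := by
    intro u v huv
    have h1 : (Ideal.Quotient.mk I x) * u = (Ideal.Quotient.mk I x) * v := by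
      simpa [Algebra.smul_def] using huv
    exact mul_left_cancel₀ (by rwa [Ne, Ideal.Quotient.eq_zero_iff_mem]) h1
  have hS := IsSMulRegular.smulShortComplex_shortExact (M := ModuleCat.of R (R ⧸ I)) hreg
  have h3 : Subsingleton (Abelian.Ext ((ModuleCat.of R (R ⧸ I)).smulShortComplex x).X₃ K (i+1)) := by
    refine ext_vanish_of_support K (i+1) (QuotSMulTop x (R ⧸ I)) ?_
    intro q' hq'
    have hann := Module.annihilator_le_of_mem_support hq'
    have hxq : x ∈ q'.asIdeal := by
      apply hann
      rw [Module.mem_annihilator]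
      intro m
      obtain ⟨m, rfl⟩ := Submodule.Quotient.mk_surjective _ m
      rw [← Submodule.Quotient.mk_smul, Submodule.Quotient.mk_eq_zero]
      exact Submodule.smul_mem_pointwise_smul _ _ _ trivial
    have hIq : I ≤ q'.asIdeal := by
      intro y hy
      apply hann
      rw [Module.mem_annihilator]
      intro m
      obtain ⟨m, rfl⟩ := Submodule.Quotient.mk_surjective _ m
      obtain ⟨m, rfl⟩ := Ideal.Quotient.mk_surjective m
      rw [← Submodule.Quotient.mk_smul, Submodule.Quotient.mk_eq_zero]
      have : y • (Ideal.Quotient.mk I) m = 0 := by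
        rw [Algebra.smul_def, Ideal.Quotient.algebraMap_eq, ← map_mul,
          Ideal.Quotient.eq_zero_iff_mem]
        exact Ideal.mul_mem_right (I := I) _ hy
      rw [this]; exact zero_mem _
    have hlt : I < q'.asIdeal := lt_of_le_of_ne hIq (fun e => hxI (e ▸ hxq))
    refine ih q'.asIdeal hlt q'.isPrime (i+1) ?_
    have hc : Order.coheight q' + 1 ≤ Order.coheight (⟨I, hI⟩ : PrimeSpectrum R) :=
      Order.coheight_add_one_le hlt
    refine lt_of_le_of_lt ?_ hi
    push_cast
    calc (i : ℕ∞) + 1 + Order.coheight q' = i + (Order.coheight q' + 1) := by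
          rw [add_assoc, add_comm 1]
      _ ≤ _ := by gcongr
  have hdiv : ∀ y : Abelian.Ext (ModuleCat.of R (R ⧸ I)) K i, ∃ z, x • z = y := by
    intro y
    obtain ⟨z, hz⟩ := Ext.contravariant_sequence_exact₁ hS K (n₁ := i+1) y (by omega)
      (Subsingleton.elim (h := h3) _ _)
    let z' : Abelian.Ext (ModuleCat.of R (R ⧸ I)) K i := z
    refine ⟨z', ?_⟩
    have h4 : (Ext.mk₀ (x • 𝟙 (ModuleCat.of R (R ⧸ I)))).comp z' (zero_add i) = y := hz
    rw [← h4, Ext.mk₀_smul, Ext.smul_comp, Ext.mk₀_id_comp]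
  have hbot : (⊤ : Submodule R (Abelian.Ext (ModuleCat.of R (R ⧸ I)) K i)) = ⊥ := by
    refine Submodule.eq_bot_of_le_smul_of_le_jacobson_bot (maximalIdeal R) _ Module.Finite.fg_top ?_
      (IsLocalRing.maximalIdeal_le_jacobson _)
    intro y _
    obtain ⟨z, rfl⟩ := hdiv y
    exact Submodule.smul_mem_smul hxm trivial
  exact (Submodule.subsingleton_iff R).1 (subsingleton_of_bot_eq_top hbot.symm)

lemma isMCM_of_ext {R : Type} [CommRing R] [IsNoetherianRing R] [IsLocalRing R] (K : ModuleCat.{0} R)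
    [Module.Finite R K] (d : ℕ) (hd : ringKrullDim R = d)
    (h : ∀ i < d, Subsingleton (Abelian.Ext (ModuleCat.of R (R ⧸ maximalIdeal R)) K i)) :
    IsMCMModule R K := by
  intro p hp
  rw [IsLocalization.AtPrime.ringKrullDim_eq_height p]
  have hle : p.height + Order.coheight (⟨p, hp⟩ : PrimeSpectrum R) ≤ d := by
    have h1 := Order.krullDim_eq_iSup_height_add_coheight_of_nonempty (α := PrimeSpectrum R)
    rw [ringKrullDim] at hd
    rw [hd] at h1
    have h2 : (d : ℕ∞) = ⨆ a : PrimeSpectrum R, Order.height a + Order.coheight a := by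
      exact_mod_cast h1
    rw [h2, show p.height = Order.height (⟨p, hp⟩ : PrimeSpectrum R) from
      PrimeSpectrum.height_eq_orderHeight ⟨p, hp⟩]
    exact le_iSup (fun a : PrimeSpectrum R => Order.height a + Order.coheight a) ⟨p, hp⟩
  have hfin : p.height ≠ ⊤ := by
    intro ht; rw [ht, top_add, top_le_iff] at hle; exact ENat.natCast_ne_top d hle
  obtain ⟨n, hn⟩ := ENat.ne_top_iff_exists.1 hfin
  rw [← hn] at hle ⊢
  have hext : ∀ i < n, Subsingleton (Abelian.Ext (ModuleCat.of R (R ⧸ p)) K i) := by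
    intro i hi
    refine isch K d h ⟨p, hp⟩ i (lt_of_lt_of_le ?_ hle)
    have hc : Order.coheight (⟨p, hp⟩ : PrimeSpectrum R) ≠ ⊤ := by
      intro ht; rw [ht, add_top, top_le_iff] at hle; exact ENat.natCast_ne_top d hle
    obtain ⟨c, hc⟩ := ENat.ne_top_iff_exists.1 hc
    rw [← hc]
    exact_mod_cast Nat.add_lt_add_right hi c
  suffices hs : ∀ j < n, Subsingleton (Abelian.Ext (ModuleCat.of (Localization.AtPrime p)
      (ResidueField (Localization.AtPrime p)))
      (ModuleCat.of (Localization.AtPrime p) (LocalizedModule p.primeCompl K)) j) by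
    have : (n : ℕ∞) ≤ moduleDepth (Localization.AtPrime p) (LocalizedModule p.primeCompl K) := by
      refine le_sInf ?_
      rintro _ ⟨j, rfl, hj⟩
      by_contra hlt
      have hlt : j < n := by exact_mod_cast not_le.1 hlt
      have := (extMod_subsingleton_iff (Localization.AtPrime p) j _ _).2 (hs j hlt)
      exact not_subsingleton _ this
    exact_mod_cast this
  cases subsingleton_or_nontrivial (LocalizedModule p.primeCompl K) with
  | inl hsub =>
    intro j _
    have hz : Limits.IsZero (ModuleCat.of (Localization.AtPrime p) (LocalizedModule p.primeCompl K)) := by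
      rw [ModuleCat.isZero_iff_subsingleton]; exact hsub
    have key : ∀ y : Abelian.Ext (ModuleCat.of (Localization.AtPrime p)
      (ResidueField (Localization.AtPrime p)))
      (ModuleCat.of (Localization.AtPrime p) (LocalizedModule p.primeCompl K)) j, y = 0 := by
      intro y
      rw [← Ext.comp_mk₀_id y, hz.eq_zero_of_src (𝟙 _), Ext.mk₀_zero, Ext.comp_zero]
    exact ⟨fun x y => by rw [key x, key y]⟩
  | inr hnt =>
    have hK : Nontrivial K := by
      by_contra hK
      rw [not_nontrivial_iff_subsingleton] at hK
      exact not_subsingleton (LocalizedModule p.primeCompl K) inferInstance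
    have hlt : p • (⊤ : Submodule R K) < ⊤ := by
      rw [lt_top_iff_ne_top]
      intro ht
      have := Submodule.eq_bot_of_le_smul_of_le_jacobson_bot p (⊤ : Submodule R K)
        Module.Finite.fg_top ht.ge ((IsLocalRing.le_maximalIdeal hp.ne_top).trans
          (IsLocalRing.maximalIdeal_le_jacobson _))
      exact not_subsingleton K ((Submodule.subsingleton_iff R).1 (subsingleton_of_bot_eq_top this.symm))
    obtain ⟨rs, hlen, hmem, hreg⟩ := ModuleCat.exists_isRegular_of_exists_subsingleton_ext p n K hlt
      (ModuleCat.of R (R ⧸ p)) (by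
        rw [Module.support_eq_zeroLocus, Ideal.annihilator_quotient]) hext
    have hreg' := hreg.1.isRegular_of_isLocalizedModule_of_mem (Localization.AtPrime p) p
      (LocalizedModule.mkLinearMap p.primeCompl K) hmem
    intro j hj
    refine ModuleCat.subsingleton_ext_of_exists_isRegular (maximalIdeal (Localization.AtPrime p))
      (ModuleCat.of (Localization.AtPrime p) (ResidueField (Localization.AtPrime p))) ?_
      (ModuleCat.of (Localization.AtPrime p) (LocalizedModule p.primeCompl K)) ?_
      (rs.map (algebraMap R (Localization.AtPrime p))) ?_ hreg' j (by simpa [hlen] using hj)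
    · intro q' hq' y hy
      refine Module.annihilator_le_of_mem_support hq' ?_
      rw [Module.mem_annihilator]
      intro m
      obtain ⟨m, rfl⟩ := IsLocalRing.residue_surjective m
      change residue _ y * residue _ m = 0
      rw [(IsLocalRing.residue_eq_zero_iff y).2 hy, zero_mul]
    · rw [lt_top_iff_ne_top]
      intro ht
      have := Submodule.eq_bot_of_le_smul_of_le_jacobson_bot _
        (⊤ : Submodule (Localization.AtPrime p) (LocalizedModule p.primeCompl K))
        Module.Finite.fg_top ht.ge (IsLocalRing.maximalIdeal_le_jacobson _)
      exact not_subsingleton (LocalizedModule p.primeCompl K)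
        ((Submodule.subsingleton_iff _).1 (subsingleton_of_bot_eq_top this.symm))
    · intro r hr
      obtain ⟨s, hs, rfl⟩ := List.mem_map.1 hr
      rw [← IsLocalization.AtPrime.map_eq_maximalIdeal p]
      exact Ideal.mem_map_of_mem _ (hmem s hs)

end partA

section partB

open Abelian

def IsSyz1 {R : Type} [CommRing R] (L K : ModuleCat.{0} R) : Prop :=
  ∃ (m : ℕ) (f : (Fin m → R) →ₗ[R] L), Function.Surjective f ∧
    K = ModuleCat.of R (LinearMap.ker f)

def IsSyz {R : Type} [CommRing R] : ℕ → ModuleCat.{0} R → ModuleCat.{0} R → Prop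
  | 0, V, K => K = V
  | n + 1, V, K => ∃ L : ModuleCat.{0} R, IsSyz n V L ∧ IsSyz1 L K

lemma IsSyz1.finite {R : Type} [CommRing R] [IsNoetherianRing R] {L K : ModuleCat.{0} R}
    (h : IsSyz1 L K) : Module.Finite R K := by
  obtain ⟨m, f, hf, rfl⟩ := h
  infer_instance

lemma IsSyz.finite {R : Type} [CommRing R] [IsNoetherianRing R] {n : ℕ} {L K : ModuleCat.{0} R}
    (h : IsSyz n L K) (hL : Module.Finite R L) : Module.Finite R K := by
  cases n with
  | zero => cases h; exact hL
  | succ n => obtain ⟨_, _, h⟩ := h; exact h.finite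

lemma exists_isSyz {R : Type} [CommRing R] [IsNoetherianRing R] (n : ℕ) (V : ModuleCat.{0} R)
    (hV : Module.Finite R V) : ∃ K, IsSyz n V K := by
  induction n with
  | zero => exact ⟨V, rfl⟩
  | succ n ih =>
    obtain ⟨L, hL⟩ := ih
    have := hL.finite hV
    obtain ⟨m, f, hf⟩ := Module.Finite.exists_fin' R L
    exact ⟨_, L, hL, m, f, hf, rfl⟩

lemma ext_free {R : Type} [CommRing R] (X : ModuleCat.{0} R) (i : ℕ) (m : ℕ)
    (h : Subsingleton (Abelian.Ext X (ModuleCat.of R R) i)) :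
    Subsingleton (Abelian.Ext X (ModuleCat.of R (Fin m → R)) i) := by
  have key : ∀ y : Abelian.Ext X (ModuleCat.of R (Fin m → R)) i, y = 0 := by
    intro y
    let φ : (ModuleCat.of R (Fin m → R) ⟶ ModuleCat.of R (Fin m → R)) →+
        Abelian.Ext X (ModuleCat.of R (Fin m → R)) i :=
      AddMonoidHom.mk' (fun f => y.comp (Ext.mk₀ f) (add_zero i)) (fun f g => by
        rw [Ext.mk₀_add, Ext.comp_add])
    have h1 : 𝟙 (ModuleCat.of R (Fin m → R)) = ∑ j : Fin m,
        ModuleCat.ofHom (LinearMap.proj (R := R) (φ := fun _ : Fin m => R) j) ≫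
          ModuleCat.ofHom (LinearMap.single R (fun _ : Fin m => R) j) := by
      apply ModuleCat.hom_ext
      rw [ModuleCat.hom_sum]
      apply LinearMap.ext
      intro v
      rw [LinearMap.sum_apply]
      exact (Finset.univ_sum_single v).symm
    have h2 : y = φ (𝟙 _) := (Ext.comp_mk₀_id y).symm
    rw [h2, h1, map_sum]
    refine Finset.sum_eq_zero fun j _ => ?_
    change y.comp (Ext.mk₀ (_ ≫ _)) (add_zero i) = 0
    rw [← Ext.mk₀_comp_mk₀, ← Ext.comp_assoc_of_third_deg_zero (h₁₂ := add_zero i)]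
    have h3 : y.comp (Ext.mk₀ (ModuleCat.ofHom
        (LinearMap.proj (R := R) (φ := fun _ : Fin m => R) j))) (add_zero i) = 0 :=
      Subsingleton.elim _ _
    rw [h3, Ext.zero_comp]
  exact ⟨fun x y => by rw [key x, key y]⟩

lemma IsSyz1.ext {R : Type} [CommRing R] {L K : ModuleCat.{0} R}
    (h : IsSyz1 L K) (X : ModuleCat.{0} R) (i : ℕ)
    (hR : Subsingleton (Abelian.Ext X (ModuleCat.of R R) i))
    (hL : ∀ j, j + 1 = i → Subsingleton (Abelian.Ext X L j)) :
    Subsingleton (Abelian.Ext X K i) := by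
  obtain ⟨m, f, hf, rfl⟩ := h
  have hS := LinearMap.shortExact_shortComplexKer hf
  have hF := ext_free X i m hR
  cases i with
  | zero =>
    have hmono : Mono f.shortComplexKer.f := hS.mono_f
    exact (Ext.postcomp_mk₀_injective_of_mono X f.shortComplexKer.f).subsingleton
  | succ i =>
    have := hL i rfl
    have key : ∀ y : Abelian.Ext X f.shortComplexKer.X₁ (i+1), y = 0 := by
      intro y
      obtain ⟨z, rfl⟩ := Ext.covariant_sequence_exact₁ X hS y
        (Subsingleton.elim (h := hF) _ _) rfl
      rw [Subsingleton.elim (h := this) z 0, Ext.zero_comp]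
    exact ⟨fun x y => (key x).trans (key y).symm⟩

lemma IsSyz.ext {R : Type} [CommRing R] {n : ℕ} {V K : ModuleCat.{0} R}
    (h : IsSyz n V K) (X : ModuleCat.{0} R) (d : ℕ)
    (hR : ∀ i < d, Subsingleton (Abelian.Ext X (ModuleCat.of R R) i)) :
    ∀ i < d, i < n → Subsingleton (Abelian.Ext X K i) := by
  induction n generalizing K with
  | zero => intro i _ h; omega
  | succ n ih =>
    obtain ⟨L, hL, h1⟩ := h
    intro i hi hn
    exact h1.ext X i (hR i hi) (fun j hj => ih hL j (by omega) (by omega))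

lemma projective_ker {S A B C : Type} [CommRing S] [AddCommGroup A] [Module S A]
    [AddCommGroup B] [Module S B] [AddCommGroup C] [Module S C] [Module.Projective S C]
    (i : A →ₗ[S] B) (f : B →ₗ[S] C) (hi : Function.Injective i) (hf : Function.Surjective f)
    (hex : Function.Exact i f) (hB : Module.Projective S B) : Module.Projective S A := by
  obtain ⟨s, hs⟩ := Module.projective_lifting_property f LinearMap.id hf
  obtain ⟨e, -⟩ := hex.splitSurjectiveEquiv hi ⟨s, hs⟩
  exact Module.Projective.of_split (e.symm.toLinearMap ∘ₗ LinearMap.inl S A C)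
      (LinearMap.fst S A C ∘ₗ e.toLinearMap) (by ext x; simp)

lemma IsSyz1.free {R : Type} [CommRing R] [IsNoetherianRing R] {L K : ModuleCat.{0} R}
    (h : IsSyz1 L K) (p : Ideal R) [p.IsPrime]
    (hL : Module.Free (Localization.AtPrime p) (LocalizedModule p.primeCompl L)) :
    Module.Free (Localization.AtPrime p) (LocalizedModule p.primeCompl K) := by
  have hKf := h.finite
  obtain ⟨m, f, hf, rfl⟩ := h
  let i' : LocalizedModule p.primeCompl (LinearMap.ker f) →ₗ[Localization.AtPrime p]
      LocalizedModule p.primeCompl (Fin m → R) :=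
    LocalizedModule.map p.primeCompl (LinearMap.ker f).subtype
  let f' : LocalizedModule p.primeCompl (Fin m → R) →ₗ[Localization.AtPrime p]
      LocalizedModule p.primeCompl L := LocalizedModule.map p.primeCompl f
  have hLP : Module.Projective (Localization.AtPrime p) (LocalizedModule p.primeCompl L) :=
    Module.Projective.of_free
  have hi : Function.Injective i' := LocalizedModule.map_injective _ _ (Submodule.subtype_injective _)
  have hf' : Function.Surjective f' := LocalizedModule.map_surjective _ _ hf
  have hex : Function.Exact i' f' := LocalizedModule.map_exact _ _ _ (LinearMap.exact_subtype_ker_map f)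
  have hF : Module.Free (Localization.AtPrime p) (LocalizedModule p.primeCompl (Fin m → R)) :=
    Module.free_of_isLocalizedModule p.primeCompl
      (LocalizedModule.mkLinearMap p.primeCompl (Fin m → R))
  have hP := projective_ker (S := Localization.AtPrime p)
    (A := LocalizedModule p.primeCompl (LinearMap.ker f)) i' f' hi hf' hex
    (@Module.Projective.of_free _ _ _ _ _ hF)
  have : Module.Finite R (LinearMap.ker f) := hKf
  exact Module.free_of_flat_of_isLocalRing

lemma IsSyz.free {R : Type} [CommRing R] [IsNoetherianRing R] {n : ℕ} {V K : ModuleCat.{0} R}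
    (h : IsSyz n V K) (p : Ideal R) [p.IsPrime]
    (hL : Module.Free (Localization.AtPrime p) (LocalizedModule p.primeCompl V)) :
    Module.Free (Localization.AtPrime p) (LocalizedModule p.primeCompl K) := by
  induction n generalizing K with
  | zero => cases h; exact hL
  | succ n ih => obtain ⟨L, hL, h1⟩ := h; exact h1.free p (ih hL)

lemma memCM0_of_isSyz {R : Type} [CommRing R] [IsNoetherianRing R] [IsLocalRing R]
    (hCM : IsCMLocalRing R) (d : ℕ) (hd : ringKrullDim R = (d : WithBot ℕ∞))
    (V K : ModuleCat.{0} R) (hV : Module.Finite R V) (n : ℕ)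
    (hn : ∀ r ∈ maximalIdeal R ^ n, ∀ v : V, r • v = 0) (h : IsSyz d V K) : MemCM0 R K := by
  have hK := h.finite hV
  refine ⟨hK, isMCM_of_ext K d hd ?_, ?_⟩
  · have hR : ∀ i < d, Subsingleton (Abelian.Ext (ModuleCat.of R (R ⧸ maximalIdeal R))
        (ModuleCat.of R R) i) := by
      intro i hi
      rw [← extMod_subsingleton_iff]
      by_contra hns
      rw [not_subsingleton_iff_nontrivial] at hns
      have h1 : moduleDepth R R ≤ i := sInf_le ⟨i, rfl, hns⟩
      rw [IsCMLocalRing, hd] at hCM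
      have h2 : moduleDepth R R = d := by exact_mod_cast hCM
      rw [h2] at h1
      have : d ≤ i := by exact_mod_cast h1
      omega
    intro i hi
    exact h.ext _ d hR i hi hi
  · intro p hp hpm
    refine h.free p ?_
    obtain ⟨x, hxm, hxI⟩ := SetLike.exists_of_lt (lt_of_le_of_ne (IsLocalRing.le_maximalIdeal hp.ne_top) hpm)
    have : Subsingleton (LocalizedModule p.primeCompl V) := by
      rw [LocalizedModule.subsingleton_iff]
      intro v
      exact ⟨x ^ n, fun h => hxI (hp.mem_of_pow_mem _ h), hn _ (Ideal.pow_mem_pow hxm n) v⟩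
    infer_instance

end partB

section partC

lemma homology_ann_iff {R : Type} [CommRing R] (a : R) (S : ShortComplex (ModuleCat.{0} R)) :
    (∀ x : S.homology, a • x = 0) ↔
      ∀ z : S.X₂, S.g.hom z = 0 → ∃ w : S.X₁, S.f.hom w = a • z := by
  have e := S.moduleCatHomologyIso.toLinearEquiv
  have h1 : (∀ x : S.homology, a • x = 0) ↔ ∀ x : S.moduleCatLeftHomologyData.H, a • x = 0 := by
    constructor
    · intro h x
      obtain ⟨y, rfl⟩ := e.surjective x
      rw [← map_smul, h, map_zero]
    · intro h x
      apply e.injective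
      rw [map_smul, h, map_zero]
  rw [h1]
  change (∀ x : (LinearMap.ker S.g.hom) ⧸ LinearMap.range S.moduleCatToCycles, a • x = 0) ↔ _
  constructor
  · intro h z hz
    have := h (Submodule.Quotient.mk ⟨z, hz⟩)
    rw [← Submodule.Quotient.mk_smul, Submodule.Quotient.mk_eq_zero] at this
    obtain ⟨w, hw⟩ := this
    exact ⟨w, congrArg Subtype.val hw⟩
  · intro h x
    obtain ⟨⟨z, hz⟩, rfl⟩ := Submodule.Quotient.mk_surjective _ x
    rw [← Submodule.Quotient.mk_smul, Submodule.Quotient.mk_eq_zero]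
    obtain ⟨w, hw⟩ := h z hz
    exact ⟨w, Subtype.ext hw⟩

lemma ann_iso {R : Type} [CommRing R] (a : R) {X Y : ModuleCat.{0} R} (e : X ≅ Y) :
    (∀ x : X, a • x = 0) ↔ ∀ x : Y, a • x = 0 := by
  have e := e.toLinearEquiv
  constructor
  · intro h x
    obtain ⟨y, rfl⟩ := e.surjective x
    rw [← map_smul, h, map_zero]
  · intro h x
    apply e.injective
    rw [map_smul, h, map_zero]

def TorAnn {R : Type} [CommRing R] (a : R) (i : ℕ) (M N : ModuleCat.{0} R) : Prop :=
  ∀ x : TorMod R i M N, a • x = 0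

open TensorProduct

lemma torAnn_iff_res {R : Type} [CommRing R] (a : R) (i : ℕ) (M N : ModuleCat.{0} R)
    (P : ProjectiveResolution N) :
    TorAnn a (i+1) M N ↔ ∀ z : M ⊗[R] (P.complex.X (i+1)),
      (P.complex.d (i+1) i).hom.lTensor M z = 0 →
        ∃ w : M ⊗[R] (P.complex.X (i+2)), (P.complex.d (i+2) (i+1)).hom.lTensor M w = a • z := by
  let F := (MonoidalCategory.tensoringLeft (ModuleCat.{0} R)).obj M
  let C := (F.mapHomologicalComplex _).obj P.complex
  have e1 : TorMod R (i+1) M N ≅ C.homology (i+1) := P.isoLeftDerivedObj F (i+1)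
  have e2 : C.homology (i+1) ≅ (C.sc' (i+2) (i+1) i).homology :=
    C.homologyIsoSc' _ _ _ (by simp) (by simp)
  exact (ann_iso a (e1 ≪≫ e2)).trans (homology_ann_iff a _)


def resπ {R : Type} [CommRing R] {K : ModuleCat.{0} R} (P : ProjectiveResolution K) :
    P.complex.X 0 ⟶ K := P.π.f 0

lemma resπ_zero {R : Type} [CommRing R] {K : ModuleCat.{0} R} (P : ProjectiveResolution K) :
    P.complex.d 1 0 ≫ resπ P = 0 := P.complex_d_comp_π_f_zero

lemma resπ_exact {R : Type} [CommRing R] {K : ModuleCat.{0} R} (P : ProjectiveResolution K) :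
    Function.Exact (P.complex.d 1 0).hom (resπ P).hom :=
  (ShortComplex.ShortExact.moduleCat_exact_iff_function_exact _).1 P.exact₀

lemma resπ_surj {R : Type} [CommRing R] {K : ModuleCat.{0} R} (P : ProjectiveResolution K) :
    Function.Surjective (resπ P).hom :=
  (ModuleCat.epi_iff_surjective _).1 (inferInstanceAs (Epi (P.π.f 0)))

section splice
variable {R : Type} [CommRing R] {m : ℕ} {N : ModuleCat.{0} R} (f : (Fin m → R) →ₗ[R] N)
  (hf : Function.Surjective f) (P : ProjectiveResolution (ModuleCat.of R (LinearMap.ker f)))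

def splMap : P.complex.X 0 ⟶ ModuleCat.of R (Fin m → R) :=
  resπ P ≫ ModuleCat.ofHom (LinearMap.ker f).subtype

lemma splMap_zero : P.complex.d 1 0 ≫ splMap f P = 0 := by
  rw [splMap, ← Category.assoc, resπ_zero, Limits.zero_comp]

def splCx : ChainComplex (ModuleCat.{0} R) ℕ :=
  ChainComplex.augment P.complex (splMap f P) (splMap_zero f P)

lemma splCx_proj (n : ℕ) : Projective ((splCx f P).X n) := by
  cases n with
  | zero =>
    change Projective (ModuleCat.of R (Fin m → R))
    exact (IsProjective.iff_projective _).1 inferInstance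
  | succ n => exact P.projective n

lemma splMap_comp : splMap f P ≫ ModuleCat.ofHom f = 0 := by
  rw [splMap, Category.assoc]
  have : ModuleCat.ofHom (LinearMap.ker f).subtype ≫ ModuleCat.ofHom f = 0 := by
    ext x; exact x.2
  rw [this, Limits.comp_zero]

lemma splMap_exact : Function.Exact (splMap f P).hom f := by
  intro x
  constructor
  · intro hx
    obtain ⟨y, hy⟩ := resπ_surj P ⟨x, hx⟩
    exact ⟨y, congrArg Subtype.val hy⟩
  · rintro ⟨y, rfl⟩
    exact ((resπ P).hom y).2

lemma splMap_exact' : Function.Exact (P.complex.d 1 0).hom (splMap f P).hom := by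
  intro x
  rw [← resπ_exact P x]
  exact ⟨fun h => Subtype.ext h, fun h => congrArg Subtype.val h⟩

lemma splCx_exactAt (n : ℕ) : (splCx f P).ExactAt (n+1) := by
  rw [HomologicalComplex.exactAt_iff' _ (n + 1 + 1) (n + 1) n (by simp) (by simp)]
  cases n with
  | zero =>
    exact (ShortComplex.ShortExact.moduleCat_exact_iff_function_exact _).2 (splMap_exact' f P)
  | succ n =>
    have := P.complex_exactAt_succ n
    rw [HomologicalComplex.exactAt_iff' _ (n + 1 + 1) (n + 1) n (by simp) (by simp)] at this
    exact this

def splRes : ProjectiveResolution N where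
  complex := splCx f P
  projective := splCx_proj f P
  π := (ChainComplex.toSingle₀Equiv _ _).symm ⟨ModuleCat.ofHom f, splMap_comp f P⟩
  quasiIso := ⟨fun n => by
    cases n
    · rw [ChainComplex.quasiIsoAt₀_iff, ShortComplex.quasiIso_iff_of_zeros']
      · refine (ShortComplex.exact_and_epi_g_iff_of_iso (S₂ := ShortComplex.mk (splMap f P)
          (ModuleCat.ofHom f) (splMap_comp f P)) ?_).2
          ⟨(ShortComplex.ShortExact.moduleCat_exact_iff_function_exact _).2 (splMap_exact f P), 
            (ModuleCat.epi_iff_surjective _).2 hf⟩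
        exact ShortComplex.isoMk (Iso.refl _) (Iso.refl _) (Iso.refl _)
          (by rfl) (by simp; rfl)
      all_goals rfl
    · rw [quasiIsoAt_iff_exactAt']
      · apply splCx_exactAt
      · apply ChainComplex.exactAt_succ_single_obj⟩

end splice

section tor
variable {R : Type} [CommRing R]

def Kil (a : R) (M : Type) [AddCommGroup M] [Module R M] {F N : Type} [AddCommGroup F] [Module R F]
    [AddCommGroup N] [Module R N] (f : F →ₗ[R] N) : Prop :=
  ∀ x : M ⊗[R] (LinearMap.ker f), (LinearMap.ker f).subtype.lTensor M x = 0 → a • x = 0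

lemma tor_one (a : R) (M : ModuleCat.{0} R) {m : ℕ} {N : ModuleCat.{0} R}
    (f : (Fin m → R) →ₗ[R] N) (hf : Function.Surjective f) :
    TorAnn a 1 M N ↔ Kil a M f := by
  let P := ProjectiveResolution.of (ModuleCat.of R (LinearMap.ker f))
  let p : P.complex.X 0 →ₗ[R] LinearMap.ker f := (resπ P).hom
  have hp : Function.Surjective p := resπ_surj P
  have hex : Function.Exact (P.complex.d 1 0).hom p := resπ_exact P
  have hT := lTensor_exact M hex hp
  have hS := LinearMap.lTensor_surjective M hp
  have hc : ∀ z : M ⊗[R] (P.complex.X 0), (splMap f P).hom.lTensor M z =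
      (LinearMap.ker f).subtype.lTensor M (p.lTensor M z) := by
    intro z
    exact LinearMap.lTensor_comp_apply M (LinearMap.ker f).subtype p z
  have h0 : TorAnn a 1 M N ↔ ∀ z : M ⊗[R] (P.complex.X 0), (splMap f P).hom.lTensor M z = 0 →
      ∃ w : M ⊗[R] (P.complex.X 1), (P.complex.d 1 0).hom.lTensor M w = a • z :=
    torAnn_iff_res a 0 M N (splRes f hf P)
  rw [h0]
  constructor
  · intro h x hx
    obtain ⟨z, rfl⟩ := hS x
    obtain ⟨w, hw⟩ := h z ((hc z).trans hx)
    rw [← map_smul]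
    exact (hT _).2 ⟨w, hw⟩
  · intro h z hz
    refine (hT _).1 ?_
    rw [map_smul]
    exact h _ ((hc z).symm.trans hz)

lemma tor_shift2 (a : R) (i : ℕ) (M : ModuleCat.{0} R) {N K : ModuleCat.{0} R} (h : IsSyz1 N K) :
    TorAnn a (i+2) M N ↔ TorAnn a (i+1) M K := by
  obtain ⟨m, f, hf, rfl⟩ := h
  let P := ProjectiveResolution.of (ModuleCat.of R (LinearMap.ker f))
  have h0 := torAnn_iff_res a (i+1) M N (splRes f hf P)
  have h1 := torAnn_iff_res a i M _ P
  exact h0.trans h1.symm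

/-- first snake -/
lemma snake1 (a : R) {F M G N : Type} [AddCommGroup F] [Module R F] [AddCommGroup M] [Module R M]
    [AddCommGroup G] [Module R G] [AddCommGroup N] [Module R N] [Module.Flat R G]
    (f : F →ₗ[R] M) (hf : Function.Surjective f) (g : G →ₗ[R] N) (hg : Function.Surjective g)
    (h : Kil a M g) (x : LinearMap.ker f ⊗[R] N)
    (hx : (LinearMap.ker f).subtype.rTensor N x = 0) : a • x = 0 := by
  have ef : Function.Exact (LinearMap.ker f).subtype f := LinearMap.exact_subtype_ker_map f
  have eg : Function.Exact (LinearMap.ker g).subtype g := LinearMap.exact_subtype_ker_map g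
  obtain ⟨y, rfl⟩ := LinearMap.lTensor_surjective (LinearMap.ker f) hg x
  have c1 : g.lTensor F ((LinearMap.ker f).subtype.rTensor G y) = 0 := by
    rw [← hx]
    exact (LinearMap.congr_fun (LinearMap.lTensor_comp_rTensor _ _ _) y).trans
      (LinearMap.congr_fun (LinearMap.rTensor_comp_lTensor _ _ _) y).symm
  obtain ⟨z, hz⟩ := (lTensor_exact F eg hg _).1 c1
  have c2 : (LinearMap.ker g).subtype.lTensor M (f.rTensor (LinearMap.ker g) z) = 0 := by
    have : (LinearMap.ker g).subtype.lTensor M (f.rTensor (LinearMap.ker g) z) =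
        f.rTensor G ((LinearMap.ker g).subtype.lTensor F z) :=
      (LinearMap.congr_fun (LinearMap.lTensor_comp_rTensor _ _ _) z).trans
      (LinearMap.congr_fun (LinearMap.rTensor_comp_lTensor _ _ _) z).symm
    rw [this, hz]
    exact (rTensor_exact G ef hf _).2 ⟨y, rfl⟩
  have c3 := h _ c2
  rw [← map_smul] at c3
  obtain ⟨u, hu⟩ := (rTensor_exact (LinearMap.ker g) ef hf _).1 c3
  have c4 : (LinearMap.ker f).subtype.rTensor G (a • y) =
      (LinearMap.ker f).subtype.rTensor G ((LinearMap.ker g).subtype.lTensor (LinearMap.ker f) u) := by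
    rw [map_smul, ← hz, ← map_smul, ← hu]
    exact (LinearMap.congr_fun (LinearMap.lTensor_comp_rTensor _ _ _) u).trans
      (LinearMap.congr_fun (LinearMap.rTensor_comp_lTensor _ _ _) u).symm
  have c5 := Module.Flat.rTensor_preserves_injective_linearMap (M := G) _
    (Submodule.subtype_injective (LinearMap.ker f)) c4
  rw [← map_smul, c5]
  exact (lTensor_exact (LinearMap.ker f) eg hg _).2 ⟨u, rfl⟩

/-- second snake (the reverse implication) -/
lemma snake2 (a : R) {F M G N : Type} [AddCommGroup F] [Module R F] [AddCommGroup M] [Module R M]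
    [AddCommGroup G] [Module R G] [AddCommGroup N] [Module R N] [Module.Flat R G] [Module.Flat R F]
    (f : F →ₗ[R] M) (hf : Function.Surjective f) (g : G →ₗ[R] N) (hg : Function.Surjective g) :
    Kil a M g ↔ Kil a N f := by
  have key : ∀ {F M G N : Type} [AddCommGroup F] [Module R F] [AddCommGroup M] [Module R M]
    [AddCommGroup G] [Module R G] [AddCommGroup N] [Module R N] [Module.Flat R G]
    (f : F →ₗ[R] M) (_ : Function.Surjective f) (g : G →ₗ[R] N) (_ : Function.Surjective g),
    Kil a M g → Kil a N f := by
    intro F M G N _ _ _ _ _ _ _ _ _ f hf g hg h x hx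
    have h1 := snake1 a f hf g hg h (TensorProduct.comm R _ _ x) (by
      have := LinearMap.congr_fun (LinearMap.rTensor_comp_comm (R := R) (N := N) (LinearMap.ker f).subtype) x
      refine this.trans ?_
      rw [LinearMap.comp_apply, hx, map_zero])
    rw [← map_smul] at h1
    exact (LinearEquiv.map_eq_zero_iff _).1 h1
  exact ⟨key f hf g hg, key g hg f hf⟩

lemma tor_sym_one (a : R) {M N : ModuleCat.{0} R} (hM : Module.Finite R M)
    (hN : Module.Finite R N) : TorAnn a 1 M N ↔ TorAnn a 1 N M := by
  obtain ⟨m, f, hf⟩ := Module.Finite.exists_fin' R M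
  obtain ⟨n, g, hg⟩ := Module.Finite.exists_fin' R N
  rw [tor_one a M g hg, tor_one a N f hf]
  exact snake2 a f hf g hg

lemma ker_swap {F G : Type} [AddCommGroup F] [Module R F] [AddCommGroup G] [Module R G]
    [Module.Flat R F] [Module.Flat R G] (K : Submodule R F) (L : Submodule R G) (x : L ⊗[R] K) :
    K.subtype.lTensor L x = 0 ↔ L.subtype.lTensor K (TensorProduct.comm R _ _ x) = 0 := by
  have h1 : K.subtype.lTensor L x = 0 ↔ TensorProduct.map L.subtype K.subtype x = 0 := by
    have e := LinearMap.congr_fun (LinearMap.rTensor_comp_lTensor _ L.subtype K.subtype) x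
    rw [← e, LinearMap.comp_apply]
    exact (map_eq_zero_iff _ (Module.Flat.rTensor_preserves_injective_linearMap (M := F) _
      (Submodule.subtype_injective L))).symm
  have h2 : L.subtype.lTensor K (TensorProduct.comm R _ _ x) = 0 ↔
      TensorProduct.map L.subtype K.subtype x = 0 := by
    have e := LinearMap.congr_fun (LinearMap.lTensor_comp_rTensor _ L.subtype K.subtype) x
    rw [← e, LinearMap.comp_apply]
    have e2 : L.subtype.lTensor K (TensorProduct.comm R _ _ x) =
      TensorProduct.comm R _ _ (L.subtype.rTensor K x) :=
      LinearMap.congr_fun (LinearMap.lTensor_comp_comm (R := R) (N := K) L.subtype) x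
    rw [e2, LinearEquiv.map_eq_zero_iff]
    exact (map_eq_zero_iff _ (Module.Flat.lTensor_preserves_injective_linearMap (M := G) _
      (Submodule.subtype_injective K))).symm
  exact h1.trans h2.symm

lemma tor_shift1_one [IsNoetherianRing R] (a : R) {M K N : ModuleCat.{0} R} (hK : IsSyz1 M K)
    (hN : Module.Finite R N) : TorAnn a 2 M N ↔ TorAnn a 1 K N := by
  obtain ⟨m, f, hf, rfl⟩ := hK
  obtain ⟨n, g, hg⟩ := Module.Finite.exists_fin' R N
  refine (tor_shift2 a 0 M (K := ModuleCat.of R (LinearMap.ker g)) ⟨n, g, hg, rfl⟩).trans ?_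
  refine Iff.trans ?_ (tor_one a (ModuleCat.of R (LinearMap.ker f)) g hg).symm
  obtain ⟨n', g', hg'⟩ := Module.Finite.exists_fin' R (LinearMap.ker g)
  refine (tor_one a M (N := ModuleCat.of R (LinearMap.ker g)) g' hg').trans ?_
  refine (snake2 a f hf g' hg').trans ?_
  constructor
  · intro h x hx
    have h1 := h (TensorProduct.comm R _ _ x) ((ker_swap _ _ _).2 (by
      rw [TensorProduct.comm_comm]; exact hx))
    rw [← map_smul] at h1
    exact (LinearEquiv.map_eq_zero_iff _).1 h1
  · intro h x hx
    have h1 := h _ ((ker_swap _ _ _).1 hx)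
    rw [← map_smul] at h1
    exact (LinearEquiv.map_eq_zero_iff _).1 h1

lemma exists_isSyz1 (N : ModuleCat.{0} R) (hN : Module.Finite R N) : ∃ K, IsSyz1 N K := by
  obtain ⟨n, g, hg⟩ := Module.Finite.exists_fin' R N
  exact ⟨_, n, g, hg, rfl⟩

lemma tor_shift1 [IsNoetherianRing R] (a : R) (i : ℕ) {M K N : ModuleCat.{0} R} (hK : IsSyz1 M K)
    (hN : Module.Finite R N) : TorAnn a (i+2) M N ↔ TorAnn a (i+1) K N := by
  induction i generalizing N with
  | zero => exact tor_shift1_one a hK hN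
  | succ i ih =>
    obtain ⟨L, hL⟩ := exists_isSyz1 N hN
    exact (tor_shift2 a (i+1) M hL).trans ((ih hL.finite).trans (tor_shift2 a i K hL).symm)

lemma tor_sym [IsNoetherianRing R] (a : R) (i : ℕ) {M N : ModuleCat.{0} R}
    (hM : Module.Finite R M) (hN : Module.Finite R N) :
    TorAnn a (i+1) M N ↔ TorAnn a (i+1) N M := by
  induction i generalizing M with
  | zero => exact tor_sym_one a hM hN
  | succ i ih =>
    obtain ⟨K, hK⟩ := exists_isSyz1 M hM
    exact (tor_shift1 a i hK hN).trans ((ih hK.finite).trans (tor_shift2 a i N hK).symm)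

lemma tor_shift1_iter [IsNoetherianRing R] (a : R) (i n : ℕ) {M K N : ModuleCat.{0} R}
    (hK : IsSyz n M K) (hN : Module.Finite R N) :
    TorAnn a (i+n+1) M N ↔ TorAnn a (i+1) K N := by
  induction n generalizing K i with
  | zero => cases hK; exact Iff.rfl
  | succ n ih =>
    obtain ⟨L, hL, h1⟩ := hK
    have := ih (i+1) hL
    rw [show i + 1 + n = i + (n + 1) by ring] at this
    exact this.trans (tor_shift1 a i h1 hN)

lemma tor_shift2_iter [IsNoetherianRing R] (a : R) (i n : ℕ) {M K N : ModuleCat.{0} R}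
    (hK : IsSyz n N K) : TorAnn a (i+n+1) M N ↔ TorAnn a (i+1) M K := by
  induction n generalizing K i with
  | zero => cases hK; exact Iff.rfl
  | succ n ih =>
    obtain ⟨L, hL, h1⟩ := hK
    have := ih (i+1) hL
    rw [show i + 1 + n = i + (n + 1) by ring] at this
    exact this.trans (tor_shift2 a i M h1)

variable [IsNoetherianRing R] [IsLocalRing R]

abbrev redMod (M : ModuleCat.{0} R) (n : ℕ) : ModuleCat.{0} R :=
  ModuleCat.of R (M ⧸ (maximalIdeal R ^ n • (⊤ : Submodule R M)))

lemma tor_red_one (a : R) {M N : ModuleCat.{0} R} (hM : Module.Finite R M)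
    (hN : Module.Finite R N) (h : ∀ n, TorAnn a 1 (redMod M n) N) : TorAnn a 1 M N := by
  obtain ⟨m, g, hg⟩ := Module.Finite.exists_fin' R N
  rw [tor_one a M g hg]
  intro x hx
  have hk := Ideal.iInf_pow_smul_eq_bot_of_isLocalRing (M := M ⊗[R] LinearMap.ker g)
    (maximalIdeal R) (IsLocalRing.maximalIdeal.isMaximal R).ne_top
  rw [← Submodule.mem_bot R, ← hk, Submodule.mem_iInf]
  intro n
  have h1 := (tor_one a _ g hg).1 (h n)
  let I := maximalIdeal R ^ n
  let S : Submodule R M := I • ⊤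
  have e := rTensor_exact (LinearMap.ker g) (f := S.subtype) (g := S.mkQ)
    (LinearMap.exact_subtype_mkQ S) (Submodule.mkQ_surjective S)
  have h2 := h1 (S.mkQ.rTensor (LinearMap.ker g) x) (by
    have : (LinearMap.ker g).subtype.lTensor (M ⧸ S) (S.mkQ.rTensor (LinearMap.ker g) x) =
        S.mkQ.rTensor (Fin m → R) ((LinearMap.ker g).subtype.lTensor M x) :=
      (LinearMap.congr_fun (LinearMap.lTensor_comp_rTensor _ _ _) x).trans
      (LinearMap.congr_fun (LinearMap.rTensor_comp_lTensor _ _ _) x).symm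
    refine this.trans ?_
    rw [hx, map_zero])
  have h3 : S.mkQ.rTensor (LinearMap.ker g) (a • x) = 0 := (map_smul _ a x).trans h2
  obtain ⟨u, hu⟩ := (e _).1 h3
  rw [← hu]
  have key : ∀ u, S.subtype.rTensor (LinearMap.ker g) u ∈
      I • (⊤ : Submodule R (M ⊗[R] LinearMap.ker g)) := by
    intro u
    induction u with
    | zero => rw [map_zero]; exact zero_mem _
    | add u v hu hv => rw [map_add]; exact add_mem hu hv
    | tmul s t =>
      have h4 : ((TensorProduct.mk R M (LinearMap.ker g)).flip t) s.1 ∈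
          S.map ((TensorProduct.mk R M (LinearMap.ker g)).flip t) := ⟨s.1, s.2, rfl⟩
      rw [Submodule.map_smul''] at h4
      exact Submodule.smul_mono le_rfl le_top h4
  exact key u

lemma tor_red (a : R) (i : ℕ) {M N : ModuleCat.{0} R} (hM : Module.Finite R M)
    (hN : Module.Finite R N) (h : ∀ n, TorAnn a (i+1) (redMod M n) N) : TorAnn a (i+1) M N := by
  obtain ⟨L, hL⟩ := exists_isSyz i N hN
  have e : ∀ M', TorAnn a (i+1) M' N ↔ TorAnn a 1 M' L := by
    intro M'
    have := tor_shift2_iter a 0 i (M := M') hL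
    rwa [zero_add, zero_add] at this
  rw [e]
  exact tor_red_one a hM (hL.finite hN) fun n => (e _).1 (h n)

lemma redMod_ann (M : ModuleCat.{0} R) (n : ℕ) :
    ∀ r ∈ maximalIdeal R ^ n, ∀ v : redMod M n, r • v = 0 := by
  intro r hr v
  obtain ⟨v, rfl⟩ := Submodule.mkQ_surjective _ v
  rw [← map_smul]
  exact (Submodule.Quotient.mk_eq_zero _).2 (Submodule.smul_mem_smul hr trivial)

lemma tor_main (hCM : IsCMLocalRing R) (d : ℕ) (hd : ringKrullDim R = (d : WithBot ℕ∞)) (a : R)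
    (h : ∀ i : ℕ, 0 < i → ∀ K L : ModuleCat.{0} R, MemCM0 R K → MemCM0 R L → TorAnn a i K L)
    (i : ℕ) {M N : ModuleCat.{0} R} (hM : Module.Finite R M) (hN : Module.Finite R N) :
    TorAnn a (i+d+d+1) M N := by
  refine tor_red a _ hM hN fun n => ?_
  have hM' : Module.Finite R (redMod M n) := inferInstance
  refine (tor_sym a _ hM' hN).2 ?_
  refine tor_red a _ hN hM' fun k => ?_
  have hN' : Module.Finite R (redMod N k) := inferInstance
  obtain ⟨K, hK⟩ := exists_isSyz d _ hM'
  obtain ⟨L, hL⟩ := exists_isSyz d _ hN'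
  refine (tor_shift1_iter a (i+d) d hL hM').2 ?_
  refine (tor_shift2_iter a i d hK).2 ?_
  exact h _ (Nat.succ_pos i) _ _ (memCM0_of_isSyz hCM d hd _ L hN' k (redMod_ann N k) hL)
    (memCM0_of_isSyz hCM d hd _ K hM' n (redMod_ann M n) hK)

end tor

end partC

/-- Let `R` be a Cohen-Macaulay noetherian local ring of Krull dimension `d`
and let `a ∈ R` annihilate `Tor_i(K,L)` for all `i > 0` and all `K, L ∈ CM₀(R)`. Then
`a^(2^(2d)) · Tor_i(M,N) = 0` for all `i > 4d` and all finitely generated `M, N`. -/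
theorem stmt5 (R : Type) [CommRing R] [IsNoetherianRing R] [IsLocalRing R]
    (hCM : IsCMLocalRing R) (d : ℕ) (hd : ringKrullDim R = (d : WithBot ℕ∞)) (a : R)
    (h : ∀ i : ℕ, 0 < i → ∀ K L : ModuleCat.{0} R, MemCM0 R K → MemCM0 R L →
        ∀ x : TorMod R i K L, a • x = 0) :
    ∀ i : ℕ, 4 * d < i → ∀ M N : ModuleCat.{0} R, Module.Finite R M → Module.Finite R N →
      ∀ x : TorMod R i M N, (a ^ (2 ^ (2 * d))) • x = 0 := by
  intro i hi M N hM hN x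
  obtain ⟨j, rfl⟩ : ∃ j, i = j + d + d + 1 := ⟨i - (d + d + 1), by omega⟩
  have h1 : a • x = 0 := tor_main hCM d hd a h j hM hN x
  obtain ⟨k, hk⟩ := Nat.exists_eq_succ_of_ne_zero (pow_pos (two_pos : 0 < 2) (2 * d)).ne'
  rw [hk, Nat.succ_eq_add_one, pow_succ, mul_smul, h1, smul_zero]

end
end
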